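/- arXiv:2402.03110 — 3 statements merged into one kernel-verified Lean document; each statement's English description precedes it below -/
import Mathlib

section
/- Let P ∈ ℝ^{k×k} be symmetric positive semidefinite, let Γ ∈ ℝ^{k×k}, let c ∈ ℝ^k, and let V > 0 be a real number. Then the matrix Γ P Γᵀ − Γ P c (cᵀ P c + V)^{−1} cᵀ P Γᵀ is symmetric positive semidefinite. -/
open Matrix

/-!
The proof uses the Joseph form of the measurement update. With `s = cᵀ P c + V > 0` and
`A = 1 - s⁻¹ P c cᵀ`, the identity `(c cᵀ) P (c cᵀ) = (cᵀ P c) c cᵀ` gives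
`P - s⁻¹ P c cᵀ P = A P Aᵀ + (V / s²) P c cᵀ P`.
Both summands on the right are positive semidefinite, and conjugation by `Γ` preserves this.
-/

theorem vecMulVec_mul_mul_vecMulVec_self {k : ℕ} (P : Matrix (Fin k) (Fin k) ℝ)
    (c : Fin k → ℝ) :
    vecMulVec c c * P * vecMulVec c c = (c ⬝ᵥ P.mulVec c) • vecMulVec c c := by
  rw [Matrix.mul_assoc, mul_vecMulVec, vecMulVec_mul_vecMulVec, vecMulVec_smul]

/-- For `P` symmetric PSD, `Γ` arbitrary, `c ∈ ℝ^k` and `V > 0`, the matrix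
`Γ P Γᵀ - Γ P c (cᵀ P c + V)⁻¹ cᵀ P Γᵀ` is symmetric positive semidefinite. -/
theorem riccati_update_posSemidef
    (k : ℕ) (P Γ : Matrix (Fin k) (Fin k) ℝ) (hP : P.PosSemidef)
    (c : Fin k → ℝ) (V : ℝ) (hV : 0 < V) :
    (Γ * P * Γᵀ - (c ⬝ᵥ P.mulVec c + V)⁻¹ • (Γ * P * vecMulVec c c * P * Γᵀ)).PosSemidef := by
  have hq : 0 ≤ c ⬝ᵥ P.mulVec c := by simpa using hP.dotProduct_mulVec_nonneg c
  have hPt : Pᵀ = P := by simpa using hP.isHermitian.eq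
  have hC : (vecMulVec c c).PosSemidef := by simpa using posSemidef_vecMulVec_self_star c
  have key := vecMulVec_mul_mul_vecMulVec_self P c
  have hCt : (vecMulVec c c)ᵀ = vecMulVec c c := transpose_vecMulVec c c
  generalize c ⬝ᵥ P.mulVec c = q at *
  generalize vecMulVec c c = C at *
  have hs : 0 < q + V := by linarith
  have hX : (P * C * P).PosSemidef := by
    simpa [hPt] using hC.mul_mul_conjTranspose_same P
  have hA := hP.mul_mul_conjTranspose_same (1 - (q + V)⁻¹ • (P * C))
  have joseph : P - (q + V)⁻¹ • (P * C * P)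
      = (1 - (q + V)⁻¹ • (P * C)) * P * (1 - (q + V)⁻¹ • (P * C))ᴴ
        + (V / (q + V) ^ 2) • (P * C * P) := by
    have h4 : P * C * P * (C * P) = q • (P * C * P) := by
      calc P * C * P * (C * P) = P * (C * P * C) * P := by simp only [Matrix.mul_assoc]
        _ = _ := by rw [key]; simp
    have ht : (1 - (q + V)⁻¹ • (P * C))ᴴ = 1 - (q + V)⁻¹ • (C * P) := by
      simp [conjTranspose_eq_transpose_of_trivial, hPt, hCt]
    rw [ht, sub_mul, mul_sub, sub_mul _ _ ((q + V)⁻¹ • (C * P))]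
    simp only [one_mul, mul_one, Matrix.smul_mul, Matrix.mul_smul, h4, ← Matrix.mul_assoc P C P]
    match_scalars
    · ring
    · field_simp
      ring
  have hM : (P - (q + V)⁻¹ • (P * C * P)).PosSemidef := by
    rw [joseph]
    exact hA.add (hX.smul (by positivity))
  have hfinal := hM.mul_mul_conjTranspose_same Γ
  simpa [mul_sub, sub_mul, conjTranspose_eq_transpose_of_trivial, Matrix.mul_assoc] using hfinal
end

section
/- Let Γ ∈ ℝ^{k×k} with largest singular value σ_max(Γ) < 1, let W ∈ ℝ^{k×k}, let c ∈ ℝ^k, let V > 0 be a real number, and let P ∈ ℝ^{k×k} be a symmetric positive semidefinite matrix satisfying the steady-state Riccati equation P = Γ P Γᵀ + W − Γ P c (cᵀ P c + V)^{−1} cᵀ P Γᵀ. Then ‖P‖_op ≤ ‖W‖_op / (1 − σ_max(Γ)²). -/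
/-!
The rank-one correction in the Riccati equation is positive semidefinite, so the quadratic forms
satisfy `⟪x, P x⟫ ≤ ⟪x, (Γ P Γᵀ + W) x⟫ ≤ ‖Γ P Γᵀ + W‖ ‖x‖²` (`dotProduct_correction_mulVec`). As `P`
is symmetric positive semidefinite, `‖P‖` is the supremum of its Rayleigh quotients
(`opNorm_le_of_quadratic_le`), hence `‖P‖ ≤ ‖Γ P Γᵀ + W‖ ≤ ‖Γ‖² ‖P‖ + ‖W‖`, and `‖Γ‖ < 1` allows
solving for `‖P‖`. Note that `W` is not assumed symmetric.
-/

open Matrix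

/-- The matrix subtracted in the Riccati equation, without its scalar factor, has a square as its
quadratic form; this is why the correction can only decrease `P`. -/
lemma dotProduct_correction_mulVec {k : ℕ} {Γ P : Matrix (Fin k) (Fin k) ℝ} (hP : Pᵀ = P)
    (c x : Fin k → ℝ) :
    x ⬝ᵥ (Γ * P * vecMulVec c c * P * Γᵀ) *ᵥ x = (c ⬝ᵥ (P * Γᵀ) *ᵥ x) ^ 2 := by
  have h : x ᵥ* (Γ * P) = (P * Γᵀ) *ᵥ x := by
    rw [← mulVec_transpose, transpose_mul, hP]
  rw [Matrix.mul_assoc _ P Γᵀ, ← mulVec_mulVec, ← mulVec_mulVec, dotProduct_mulVec, h,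
    vecMulVec_mulVec]
  simp [dotProduct_comm _ c, sq]

/-- A positive semidefinite matrix whose quadratic form is at most `C ‖x‖²` has operator norm at
most `C`. -/
lemma opNorm_le_of_quadratic_le {k : ℕ} {P : Matrix (Fin k) (Fin k) ℝ} (hP : P.PosSemidef)
    {C : ℝ} (hC : 0 ≤ C)
    (h : ∀ x : EuclideanSpace ℝ (Fin k), inner ℝ x (toEuclideanCLM (𝕜 := ℝ) P x) ≤ C * ‖x‖ ^ 2) :
    ‖toEuclideanCLM (𝕜 := ℝ) P‖ ≤ C := by
  have hsa : IsSelfAdjoint (toEuclideanCLM (𝕜 := ℝ) P) := by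
    have : IsSelfAdjoint P := hP.isHermitian
    exact this.map _
  rw [ContinuousLinearMap.norm_eq_iSup_rayleighQuotient _ hsa.isSymmetric]
  refine ciSup_le fun x => ?_
  have h0 : 0 ≤ inner ℝ x (toEuclideanCLM (𝕜 := ℝ) P x) := by
    rw [inner_toEuclideanCLM]
    simpa using hP.dotProduct_mulVec_nonneg (WithLp.ofLp x)
  rw [ContinuousLinearMap.rayleighQuotient, ContinuousLinearMap.reApplyInnerSelf_apply,
    real_inner_comm]
  simp only [RCLike.re_to_real]
  rw [abs_of_nonneg (by positivity)]
  exact div_le_of_le_mul₀ (by positivity) hC (h x)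

/-- If `σ_max(Γ) = ‖Γ‖_op < 1` and `P` is a symmetric PSD solution of the steady-state
Riccati equation `P = Γ P Γᵀ + W - Γ P c (cᵀ P c + V)⁻¹ cᵀ P Γᵀ` (with one-dimensional
measurement `cᵀ` and noise variance `V > 0`), then
`‖P‖_op ≤ ‖W‖_op / (1 - σ_max(Γ)²)`.  Operator norms are realized via
`Matrix.toEuclideanCLM`. -/
theorem steady_state_covariance_opNorm_bound
    (k : ℕ) (Γ W P : Matrix (Fin k) (Fin k) ℝ)
    (hΓ : ‖toEuclideanCLM (𝕜 := ℝ) Γ‖ < 1)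
    (c : Fin k → ℝ) (V : ℝ) (hV : 0 < V)
    (hP : P.PosSemidef)
    (hRiccati : P = Γ * P * Γᵀ + W
      - (c ⬝ᵥ P.mulVec c + V)⁻¹ • (Γ * P * vecMulVec c c * P * Γᵀ)) :
    ‖toEuclideanCLM (𝕜 := ℝ) P‖
      ≤ ‖toEuclideanCLM (𝕜 := ℝ) W‖ / (1 - ‖toEuclideanCLM (𝕜 := ℝ) Γ‖ ^ 2) := by
  have hPt : Pᵀ = P := by simpa using hP.isHermitian.eq
  have hcPc : 0 ≤ c ⬝ᵥ P *ᵥ c := by simpa using hP.dotProduct_mulVec_nonneg c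
  have hadj : ‖toEuclideanCLM (𝕜 := ℝ) Γᵀ‖ = ‖toEuclideanCLM (𝕜 := ℝ) Γ‖ := by
    have h : Γᵀ = star Γ := by rw [star_eq_conjTranspose, conjTranspose_eq_transpose_of_trivial]
    rw [h, map_star, ContinuousLinearMap.star_eq_adjoint]
    exact LinearIsometryEquiv.norm_map ContinuousLinearMap.adjoint _
  have hΓPΓ : ‖toEuclideanCLM (𝕜 := ℝ) (Γ * P * Γᵀ)‖ ≤
      ‖toEuclideanCLM (𝕜 := ℝ) Γ‖ ^ 2 * ‖toEuclideanCLM (𝕜 := ℝ) P‖ := by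
    rw [map_mul, map_mul]
    refine (norm_mul₃_le).trans (le_of_eq ?_)
    rw [hadj]
    ring
  have key : ‖toEuclideanCLM (𝕜 := ℝ) P‖ ≤
      ‖toEuclideanCLM (𝕜 := ℝ) (Γ * P * Γᵀ + W)‖ := by
    refine opNorm_le_of_quadratic_le hP (norm_nonneg _) fun x => ?_
    calc inner ℝ x (toEuclideanCLM (𝕜 := ℝ) P x)
        ≤ inner ℝ x (toEuclideanCLM (𝕜 := ℝ) (Γ * P * Γᵀ + W) x) := by
          rw [inner_toEuclideanCLM, inner_toEuclideanCLM]
          have hq := congrArg (fun M => x.ofLp ⬝ᵥ M *ᵥ x.ofLp) hRiccati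
          simp only [sub_mulVec, dotProduct_sub, smul_mulVec, dotProduct_smul,
            dotProduct_correction_mulVec hPt, smul_eq_mul] at hq
          have : 0 ≤ (c ⬝ᵥ P *ᵥ c + V)⁻¹ * (c ⬝ᵥ (P * Γᵀ) *ᵥ x.ofLp) ^ 2 := by positivity
          linarith
      _ ≤ ‖x‖ * ‖toEuclideanCLM (𝕜 := ℝ) (Γ * P * Γᵀ + W) x‖ := real_inner_le_norm _ _
      _ ≤ ‖x‖ * (‖toEuclideanCLM (𝕜 := ℝ) (Γ * P * Γᵀ + W)‖ * ‖x‖) := by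
          gcongr
          exact ContinuousLinearMap.le_opNorm _ _
      _ = _ := by ring
  have hadd : ‖toEuclideanCLM (𝕜 := ℝ) (Γ * P * Γᵀ + W)‖ ≤
      ‖toEuclideanCLM (𝕜 := ℝ) (Γ * P * Γᵀ)‖ + ‖toEuclideanCLM (𝕜 := ℝ) W‖ := by
    rw [map_add]
    exact norm_add_le _ _
  have hpos : 0 < 1 - ‖toEuclideanCLM (𝕜 := ℝ) Γ‖ ^ 2 := by
    nlinarith [norm_nonneg (toEuclideanCLM (𝕜 := ℝ) Γ)]
  rw [le_div_iff₀ hpos]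
  linarith
end

section
/- Let d ≥ 1, λ > 0, let φ_1, …, φ_n ∈ ℝ^d, b_1, …, b_n, ε_1, …, ε_n ∈ ℝ, θ ∈ ℝ^d, and set r_j = φ_jᵀ θ + b_j + ε_j, V = λ I_d + Σ_{j=1}^n φ_j φ_jᵀ, θ̂ = V^{−1} Σ_{j=1}^n φ_j r_j. Then ‖θ̂ − θ‖_V ≤ ‖Σ_{j=1}^n φ_j ε_j‖_{V^{−1}} + √λ ‖θ‖ + √(Σ_{j=1}^n b_j²) · √(Σ_{j=1}^n φ_jᵀ V^{−1} φ_j). -/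
open Matrix

/-!
Write `e = θ̂ - θ`. Since `V θ̂ = ∑ r_j φ_j` and `V θ = λ θ + ∑ (φ_j ⬝ θ) φ_j`, the error solves
`V e = ∑ ε_j φ_j + ∑ b_j φ_j - λ θ`. Pairing with `e` writes `‖e‖_V²` as a sum of three terms,
each bounded by `‖e‖_V` times the corresponding term of the claim: the noise and bias terms by
the duality `|e ⬝ x| ≤ ‖e‖_V ‖x‖_{V⁻¹}` (`abs_dotProduct_le_dual`), the bias term with a further
Cauchy–Schwarz over `j`, and the regularization term because `λ ‖e‖² ≤ ‖e‖_V²`. Dividing by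
`‖e‖_V` gives the bound.
-/

/-- Cauchy–Schwarz duality between the `V`-norm and the `V⁻¹`-norm. -/
lemma abs_dotProduct_le_dual {d : ℕ} {V : Matrix (Fin d) (Fin d) ℝ} (hV : V.PosDef)
    (e x : Fin d → ℝ) :
    |e ⬝ᵥ x| ≤ Real.sqrt (e ⬝ᵥ V.mulVec e) * Real.sqrt (x ⬝ᵥ V⁻¹.mulVec x) := by
  have hnn : ∀ y : Fin d → ℝ, 0 ≤ y ⬝ᵥ V.mulVec y := fun y => by
    simpa using hV.posSemidef.dotProduct_mulVec_nonneg y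
  have hdet : IsUnit V.det := (Matrix.isUnit_iff_isUnit_det V).1 hV.isUnit
  have hz : V.mulVec (V⁻¹.mulVec x) = x := by
    rw [mulVec_mulVec, mul_nonsing_inv _ hdet, one_mulVec]
  have hT : Vᵀ = V := by
    rw [← conjTranspose_eq_transpose_of_trivial, hV.isHermitian.eq]
  have hsymm : (V⁻¹.mulVec x) ⬝ᵥ V.mulVec e = e ⬝ᵥ x := by
    rw [dotProduct_mulVec, ← mulVec_transpose, hT, hz, dotProduct_comm]
  -- `t ↦ ‖e + t V⁻¹ x‖_V²` is a nonnegative quadratic, so its discriminant is nonpositive.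
  have hq : ∀ t : ℝ, 0 ≤ (x ⬝ᵥ V⁻¹.mulVec x) * (t * t) + (2 * (e ⬝ᵥ x)) * t
      + e ⬝ᵥ V.mulVec e := fun t => by
    have h := hnn (e + t • V⁻¹.mulVec x)
    simp only [mulVec_add, mulVec_smul, hz, dotProduct_add, add_dotProduct, smul_dotProduct,
      dotProduct_smul, hsymm, smul_eq_mul] at h
    rw [dotProduct_comm (V⁻¹.mulVec x) x] at h
    linarith
  have hdisc := discrim_le_zero hq
  unfold discrim at hdisc
  rw [← Real.sqrt_mul (hnn e)]
  apply Real.abs_le_sqrt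
  nlinarith

/-- Deterministic confidence-ellipsoid bound for ridge regression under the misspecified
linear model `r_j = φ_jᵀθ + b_j + ε_j`:
`‖θ̂ - θ‖_V ≤ ‖∑_j ε_j φ_j‖_{V⁻¹} + √λ ‖θ‖ + √(∑_j b_j²) √(∑_j φ_jᵀ V⁻¹ φ_j)`,
where `‖x‖_M = √(xᵀ M x)` and `‖θ‖ = √(θᵀθ)`. -/
theorem ridge_confidence_bound
    (d n : ℕ) (hd : 1 ≤ d) (lam : ℝ) (hlam : 0 < lam)
    (φ : Fin n → Fin d → ℝ) (b ε : Fin n → ℝ) (θ : Fin d → ℝ)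
    (r : Fin n → ℝ) (hr : ∀ j, r j = φ j ⬝ᵥ θ + b j + ε j)
    (V : Matrix (Fin d) (Fin d) ℝ)
    (hV : V = lam • (1 : Matrix (Fin d) (Fin d) ℝ) + ∑ j, vecMulVec (φ j) (φ j))
    (θhat : Fin d → ℝ)
    (hθhat : θhat = V⁻¹.mulVec (∑ j, r j • φ j)) :
    Real.sqrt ((θhat - θ) ⬝ᵥ V.mulVec (θhat - θ))
      ≤ Real.sqrt ((∑ j, ε j • φ j) ⬝ᵥ V⁻¹.mulVec (∑ j, ε j • φ j))
        + Real.sqrt lam * Real.sqrt (θ ⬝ᵥ θ)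
        + Real.sqrt (∑ j, (b j) ^ 2) * Real.sqrt (∑ j, φ j ⬝ᵥ V⁻¹.mulVec (φ j)) := by
  have hVmul : ∀ y, V.mulVec y = lam • y + ∑ j, (φ j ⬝ᵥ y) • φ j := fun y => by
    rw [hV, add_mulVec, smul_mulVec, one_mulVec, sum_mulVec]
    congr 1
    refine Finset.sum_congr rfl fun j _ => ?_
    rw [vecMulVec_mulVec]
    ext i
    simp [mul_comm]
  have hquad : ∀ y, y ⬝ᵥ V.mulVec y = lam * (y ⬝ᵥ y) + ∑ j, (φ j ⬝ᵥ y) ^ 2 := fun y => by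
    rw [hVmul, dotProduct_add, dotProduct_smul, dotProduct_sum, smul_eq_mul]
    congr 1
    refine Finset.sum_congr rfl fun j _ => ?_
    rw [dotProduct_smul, smul_eq_mul, dotProduct_comm y, sq]
  have hsq : ∀ y : Fin d → ℝ, 0 ≤ y ⬝ᵥ y := fun y =>
    Finset.sum_nonneg fun i _ => mul_self_nonneg _
  have hlow : ∀ y, lam * (y ⬝ᵥ y) ≤ y ⬝ᵥ V.mulVec y := fun y => by
    rw [hquad]
    exact le_add_of_nonneg_right (Finset.sum_nonneg fun j _ => sq_nonneg _)
  have hPD : V.PosDef := by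
    refine PosDef.of_dotProduct_mulVec_pos ?_ fun {y} hy => ?_
    · ext i j
      simp only [hV, conjTranspose_apply, Matrix.add_apply, Matrix.smul_apply, Matrix.sum_apply,
        vecMulVec_apply, star_trivial, one_apply, eq_comm (a := i), mul_comm (φ _ i)]
    · have h1 : 0 < y ⬝ᵥ y :=
        lt_of_le_of_ne (hsq y) fun h => hy (dotProduct_self_eq_zero.1 h.symm)
      simpa using lt_of_lt_of_le (mul_pos hlam h1) (hlow y)
  have hdet : IsUnit V.det := (Matrix.isUnit_iff_isUnit_det V).1 hPD.isUnit
  have hinv : ∀ y : Fin d → ℝ, 0 ≤ y ⬝ᵥ V⁻¹.mulVec y := fun y => by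
    simpa using hPD.inv.posSemidef.dotProduct_mulVec_nonneg y
  obtain ⟨e, he⟩ : ∃ e, e = θhat - θ := ⟨_, rfl⟩
  have hVe : V.mulVec e = ∑ j, ε j • φ j + ∑ j, b j • φ j - lam • θ := by
    rw [he, mulVec_sub, hθhat, mulVec_mulVec, mul_nonsing_inv _ hdet, one_mulVec, hVmul θ]
    simp only [hr, add_smul, Finset.sum_add_distrib]
    abel
  rw [← he]
  set N := Real.sqrt (e ⬝ᵥ V.mulVec e) with hN
  have hN0 : 0 ≤ N := Real.sqrt_nonneg _
  have hNN : N * N = e ⬝ᵥ (∑ j, ε j • φ j) + ∑ j, b j * (e ⬝ᵥ φ j) - lam * (e ⬝ᵥ θ) := by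
    rw [hN, Real.mul_self_sqrt ((mul_nonneg hlam.le (hsq e)).trans (hlow e)), hVe,
      dotProduct_sub, dotProduct_add, dotProduct_smul, smul_eq_mul,
      dotProduct_sum e _ (fun j => b j • φ j)]
    simp only [dotProduct_smul, smul_eq_mul]
  have hnoise := (le_abs_self _).trans (abs_dotProduct_le_dual hPD e (∑ j, ε j • φ j))
  have hbias : ∑ j, b j * (e ⬝ᵥ φ j)
      ≤ N * (Real.sqrt (∑ j, (b j) ^ 2) * Real.sqrt (∑ j, φ j ⬝ᵥ V⁻¹.mulVec (φ j))) := by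
    have h1 := Real.sum_mul_le_sqrt_mul_sqrt Finset.univ b (fun j => e ⬝ᵥ φ j)
    have h2 : Real.sqrt (∑ j, (e ⬝ᵥ φ j) ^ 2)
        ≤ N * Real.sqrt (∑ j, φ j ⬝ᵥ V⁻¹.mulVec (φ j)) := by
      apply Real.sqrt_le_iff.2 ⟨by positivity, ?_⟩
      rw [mul_pow, Real.sq_sqrt (Finset.sum_nonneg fun j _ => hinv _), Finset.mul_sum]
      refine Finset.sum_le_sum fun j _ => ?_
      have h3 := pow_le_pow_left₀ (abs_nonneg _) (abs_dotProduct_le_dual hPD e (φ j)) 2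
      rwa [sq_abs, mul_pow, Real.sq_sqrt (hinv _)] at h3
    have h4 := mul_le_mul_of_nonneg_left h2 (Real.sqrt_nonneg (∑ j, (b j) ^ 2))
    linarith
  have hreg : -(lam * (e ⬝ᵥ θ)) ≤ N * (Real.sqrt lam * Real.sqrt (θ ⬝ᵥ θ)) := by
    have h1 : |e ⬝ᵥ θ| ≤ Real.sqrt (e ⬝ᵥ e) * Real.sqrt (θ ⬝ᵥ θ) := by
      simpa using abs_dotProduct_le_dual (PosDef.one (n := Fin d) (R := ℝ)) e θ
    have h2 : Real.sqrt lam * Real.sqrt (e ⬝ᵥ e) ≤ N := by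
      rw [← Real.sqrt_mul hlam.le]
      exact Real.sqrt_le_sqrt (hlow e)
    calc -(lam * (e ⬝ᵥ θ)) ≤ lam * |e ⬝ᵥ θ| := by
          nlinarith [neg_abs_le (e ⬝ᵥ θ)]
      _ ≤ lam * (Real.sqrt (e ⬝ᵥ e) * Real.sqrt (θ ⬝ᵥ θ)) := by gcongr
      _ = (Real.sqrt lam * Real.sqrt (e ⬝ᵥ e)) * (Real.sqrt lam * Real.sqrt (θ ⬝ᵥ θ)) := by
          nth_rewrite 1 [← Real.mul_self_sqrt hlam.le]
          ring
      _ ≤ _ := by gcongr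
  rcases hN0.eq_or_lt with h0 | hpos
  · rw [← h0]
    positivity
  · refine le_of_mul_le_mul_left ?_ hpos
    linarith
end
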